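/- Let g : ℝ^p → ℝ^m (m = p, just-identified) be twice continuously differentiable with Jacobian G, let W be an m×m symmetric positive definite matrix with λ_min(W) ≥ λ̲_W > 0 and λ_max(W) ≤ λ̄_W, let θ̂ satisfy G(θ̂)ᵀ W g(θ̂) = 0, suppose G is Lipschitz continuous with constant L ≥ 0 and σ_min[G(θ)] ≥ σ̲ > 0 for all ‖θ − θ̂‖ ≤ R_G. Fix γ ∈ (0,1) and γ̃ ∈ (0,γ), and set R = min(R_G, ((γ−γ̃)/γ)·σ̲·√(λ̲_W/λ̄_W)/L − (1/(σ̲·√λ̲_W))·‖g(θ̂)‖_W). Then for any θ_0 with ‖θ_0 − θ̂‖ ≤ R, the Gauss-Newton iterates θ_{k+1} = θ_k − γ[G(θ_k)ᵀ W G(θ_k)]⁻¹ G(θ_k)ᵀ W g(θ_k) satisfy ‖θ_{k+1} − θ̂‖ ≤ (1 − γ̃)‖θ_k − θ̂‖ ≤ (1 − γ̃)^{k+1}‖θ_0 − θ̂‖ for all k ≥ 0. -/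

import Mathlib

open Matrix Set MeasureTheory
open scoped BigOperators

noncomputable section

/-- Euclidean norm of a vector in `Fin n → ℝ`. -/
def enorm' {n : ℕ} (v : Fin n → ℝ) : ℝ := Real.sqrt (∑ i, v i ^ 2)

/-- Smallest singular value of a matrix. -/
def sigMin {m p : ℕ} (A : Matrix (Fin m) (Fin p) ℝ) : ℝ :=
  sInf {c : ℝ | ∃ v : Fin p → ℝ, enorm' v = 1 ∧ c = enorm' (A *ᵥ v)}

/-- Largest singular value of a matrix (operator norm). -/
def sigMax {m p : ℕ} (A : Matrix (Fin m) (Fin p) ℝ) : ℝ :=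
  sSup {c : ℝ | ∃ v : Fin p → ℝ, enorm' v = 1 ∧ c = enorm' (A *ᵥ v)}

/-- Smallest eigenvalue of a (symmetric) square matrix, via the Rayleigh quotient. -/
def lamMin {n : ℕ} (A : Matrix (Fin n) (Fin n) ℝ) : ℝ :=
  sInf {c : ℝ | ∃ v : Fin n → ℝ, enorm' v = 1 ∧ c = v ⬝ᵥ (A *ᵥ v)}

/-- Largest eigenvalue of a (symmetric) square matrix, via the Rayleigh quotient. -/
def lamMax {n : ℕ} (A : Matrix (Fin n) (Fin n) ℝ) : ℝ :=
  sSup {c : ℝ | ∃ v : Fin n → ℝ, enorm' v = 1 ∧ c = v ⬝ᵥ (A *ᵥ v)}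

/-- Weighted norm `‖v‖_W = √(vᵀ W v)`. -/
def wnorm {m : ℕ} (W : Matrix (Fin m) (Fin m) ℝ) (v : Fin m → ℝ) : ℝ :=
  Real.sqrt (v ⬝ᵥ (W *ᵥ v))

/-- A matrix viewed as a continuous linear map `ℝ^p → ℝ^m`. -/
def toCLM {m p : ℕ} (A : Matrix (Fin m) (Fin p) ℝ) : (Fin p → ℝ) →L[ℝ] (Fin m → ℝ) :=
  LinearMap.toContinuousLinearMap A.mulVecLin

lemma enorm'_eq {n : ℕ} (v : Fin n → ℝ) : enorm' v = ‖WithLp.toLp 2 v‖ := by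
  rw [EuclideanSpace.norm_eq]
  simp [enorm']

lemma enorm'_nonneg {n : ℕ} (v : Fin n → ℝ) : 0 ≤ enorm' v := Real.sqrt_nonneg _

lemma enorm'_smul {n : ℕ} (c : ℝ) (v : Fin n → ℝ) : enorm' (c • v) = |c| * enorm' v := by
  rw [enorm'_eq, enorm'_eq, WithLp.toLp_smul, norm_smul, Real.norm_eq_abs]

lemma enorm'_add_le {n : ℕ} (v w : Fin n → ℝ) : enorm' (v + w) ≤ enorm' v + enorm' w := by
  rw [enorm'_eq, enorm'_eq, enorm'_eq, WithLp.toLp_add]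
  exact norm_add_le _ _

lemma enorm'_zero {n : ℕ} : enorm' (0 : Fin n → ℝ) = 0 := by simp [enorm']

lemma enorm'_eq_zero {n : ℕ} {v : Fin n → ℝ} (h : enorm' v = 0) : v = 0 := by
  rw [enorm'_eq, norm_eq_zero] at h
  simpa using h

lemma enorm'_mul_self {n : ℕ} (v : Fin n → ℝ) : v ⬝ᵥ v = enorm' v * enorm' v := by
  unfold enorm'
  rw [Real.mul_self_sqrt (Finset.sum_nonneg fun i _ => sq_nonneg _)]
  simp [dotProduct, pow_two]

lemma dot_le_enorm' {n : ℕ} (v w : Fin n → ℝ) : v ⬝ᵥ w ≤ enorm' v * enorm' w := by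
  unfold enorm'
  exact Real.sum_mul_le_sqrt_mul_sqrt _ _ _

lemma enorm'_mulVec_bdd {m p : ℕ} (A : Matrix (Fin m) (Fin p) ℝ) :
    ∃ C : ℝ, ∀ v, enorm' (A *ᵥ v) ≤ C * enorm' v := by
  refine ⟨‖LinearMap.toContinuousLinearMap (Matrix.toLpLin 2 2 A)‖, fun v => ?_⟩
  rw [enorm'_eq, enorm'_eq]
  exact ContinuousLinearMap.le_opNorm
    (LinearMap.toContinuousLinearMap (Matrix.toLpLin 2 2 A)) (WithLp.toLp 2 v)

lemma enorm'_normalize {n : ℕ} {v : Fin n → ℝ} (h : v ≠ 0) :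
    0 < enorm' v ∧ enorm' ((enorm' v)⁻¹ • v) = 1 := by
  have h1 : 0 < enorm' v :=
    lt_of_le_of_ne (enorm'_nonneg v) fun h2 => h (enorm'_eq_zero h2.symm)
  refine ⟨h1, ?_⟩
  rw [enorm'_smul, abs_of_pos (inv_pos.2 h1), inv_mul_cancel₀ h1.ne']

lemma le_sigMax {m p : ℕ} (A : Matrix (Fin m) (Fin p) ℝ) (v : Fin p → ℝ) :
    enorm' (A *ᵥ v) ≤ sigMax A * enorm' v := by
  by_cases h : v = 0
  · subst h; simp [enorm'_zero]
  obtain ⟨h1, h2⟩ := enorm'_normalize h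
  obtain ⟨C, hC⟩ := enorm'_mulVec_bdd A
  have h3 : enorm' (A *ᵥ ((enorm' v)⁻¹ • v)) ≤ sigMax A := by
    refine le_csSup ⟨C, ?_⟩ ⟨_, h2, rfl⟩
    rintro c ⟨w, hw, rfl⟩
    simpa [hw] using hC w
  rw [Matrix.mulVec_smul, enorm'_smul, abs_of_pos (inv_pos.2 h1), inv_mul_le_iff₀ h1] at h3
  linarith

lemma sigMin_le {m p : ℕ} (A : Matrix (Fin m) (Fin p) ℝ) (v : Fin p → ℝ) :
    sigMin A * enorm' v ≤ enorm' (A *ᵥ v) := by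
  by_cases h : v = 0
  · subst h; simp [enorm'_zero]
  obtain ⟨h1, h2⟩ := enorm'_normalize h
  have h3 : sigMin A ≤ enorm' (A *ᵥ ((enorm' v)⁻¹ • v)) := by
    refine csInf_le ⟨0, ?_⟩ ⟨_, h2, rfl⟩
    rintro c ⟨w, hw, rfl⟩
    exact enorm'_nonneg _
  rw [Matrix.mulVec_smul, enorm'_smul, abs_of_pos (inv_pos.2 h1), le_inv_mul_iff₀ h1] at h3
  linarith

lemma lamMin_le_lamMax {n : ℕ} (A : Matrix (Fin n) (Fin n) ℝ) (hpos : 0 < lamMin A) :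
    lamMin A ≤ lamMax A := by
  obtain ⟨C, hC⟩ := enorm'_mulVec_bdd A
  have key : ∀ w : Fin n → ℝ, enorm' w = 1 → w ⬝ᵥ (A *ᵥ w) ≤ C ∧ -C ≤ w ⬝ᵥ (A *ᵥ w) := by
    intro w hw
    have a1 := dot_le_enorm' w (A *ᵥ w)
    have a2 := dot_le_enorm' ((-1 : ℝ) • w) (A *ᵥ w)
    have a3 := hC w
    rw [enorm'_smul, smul_dotProduct] at a2
    simp [hw] at a1 a2 a3
    constructor <;> linarith
  have hne : {c : ℝ | ∃ v : Fin n → ℝ, enorm' v = 1 ∧ c = v ⬝ᵥ (A *ᵥ v)}.Nonempty := by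
    by_contra h
    rw [Set.not_nonempty_iff_eq_empty] at h
    unfold lamMin at hpos
    rw [h, Real.sInf_empty] at hpos
    exact lt_irrefl _ hpos
  refine csInf_le_csSup hne ⟨-C, ?_⟩ ⟨C, ?_⟩ 
  · rintro c ⟨w, hw, rfl⟩
    exact (key w hw).2
  · rintro c ⟨w, hw, rfl⟩
    exact (key w hw).1

lemma taylor_bound {p : ℕ}
    (g : (Fin p → ℝ) → (Fin p → ℝ))
    (G : (Fin p → ℝ) → Matrix (Fin p) (Fin p) ℝ)
    (L : ℝ) (hL : 0 ≤ L)
    (hG : ∀ θ, HasFDerivAt g (toCLM (G θ)) θ)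
    (hLip : ∀ θ₁ θ₂, sigMax (G θ₁ - G θ₂) ≤ L * enorm' (θ₁ - θ₂))
    (x y : Fin p → ℝ) :
    enorm' (G x *ᵥ (x - y) - (g x - g y)) ≤ L * enorm' (x - y) * enorm' (x - y) := by
  set d := x - y with hd
  set v := G x *ᵥ d - (g x - g y) with hv
  have hder : ∀ t : ℝ, HasDerivAt (fun t : ℝ => v ⬝ᵥ (t • (G x *ᵥ d) - g (y + t • d)))
      (v ⬝ᵥ ((G x - G (y + t • d)) *ᵥ d)) t := by
    intro t
    have h1 : HasDerivAt (fun t : ℝ => y + t • d) d t := by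
      simpa using ((hasDerivAt_id t).smul_const d).const_add y
    have h2 : HasDerivAt (fun t : ℝ => g (y + t • d)) (G (y + t • d) *ᵥ d) t := by
      have h := HasFDerivAt.comp_hasDerivAt (f := fun t : ℝ => y + t • d) t (hG (y + t • d)) h1
      exact h
    have h3 : HasDerivAt (fun t : ℝ => t • (G x *ᵥ d)) (G x *ᵥ d) t := by
      simpa using (hasDerivAt_id t).smul_const (G x *ᵥ d)
    have h4 := h3.sub h2
    rw [hasDerivAt_pi] at h4
    rw [Matrix.sub_mulVec]
    unfold dotProduct
    exact HasDerivAt.fun_sum fun i _ => (h4 i).const_mul (v i)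
  obtain ⟨t, ht, hs⟩ := exists_hasDerivAt_eq_slope
    (fun t : ℝ => v ⬝ᵥ (t • (G x *ᵥ d) - g (y + t • d))) _ zero_lt_one
    (fun t _ => (hder t).continuousAt.continuousWithinAt) (fun t _ => hder t)
  have hxy : y + d = x := by rw [hd]; abel
  have e1 : v ⬝ᵥ v = v ⬝ᵥ ((G x - G (y + t • d)) *ᵥ d) := by
    rw [hs]
    simp only [one_smul, zero_smul, add_zero, hxy, sub_zero, div_one, zero_sub]
    rw [← dotProduct_sub]
    congr 1
    rw [hv]; abel
  have e2 := dot_le_enorm' v ((G x - G (y + t • d)) *ᵥ d)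
  have e3 := le_sigMax (G x - G (y + t • d)) d
  have e4 := hLip x (y + t • d)
  have e5 : x - (y + t • d) = (1 - t) • d := by
    rw [sub_smul, one_smul, hd]; abel
  rw [e5, enorm'_smul, abs_of_pos (by linarith [ht.2])] at e4
  have nd := enorm'_nonneg d
  have nv := enorm'_nonneg v
  have e6 : sigMax (G x - G (y + t • d)) ≤ L * enorm' d := by
    refine e4.trans (mul_le_mul_of_nonneg_left ?_ hL)
    nlinarith [ht.1]
  have e7 := e3.trans (mul_le_mul_of_nonneg_right e6 nd)
  rw [← e1, enorm'_mul_self] at e2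
  rcases nv.eq_or_lt with h | h
  · rw [← h]; positivity
  · exact (le_of_mul_le_mul_left e2 h).trans e7

lemma isUnit_of_sigMin {p : ℕ} (A : Matrix (Fin p) (Fin p) ℝ) (h : 0 < sigMin A) :
    IsUnit A := by
  rw [← Matrix.mulVec_injective_iff_isUnit]
  intro v w hvw
  have h1 := sigMin_le A (v - w)
  have h2 : A *ᵥ (v - w) = 0 := by rw [Matrix.mulVec_sub]; exact sub_eq_zero.2 hvw
  rw [h2, enorm'_zero] at h1
  have h3 : enorm' (v - w) = 0 := by
    have := enorm'_nonneg (v - w)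
    nlinarith
  exact sub_eq_zero.1 (enorm'_eq_zero h3)

lemma gn_step {p : ℕ} (A W : Matrix (Fin p) (Fin p) ℝ) (hA : IsUnit A) (hW : IsUnit W)
    (b : Fin p → ℝ) :
    A *ᵥ ((Aᵀ * W * A)⁻¹ *ᵥ (Aᵀ *ᵥ (W *ᵥ b))) = b := by
  have hA' : IsUnit A.det := (Matrix.isUnit_iff_isUnit_det A).1 hA
  have hW' : IsUnit W.det := (Matrix.isUnit_iff_isUnit_det W).1 hW
  have hAt : IsUnit (Aᵀ).det := by rwa [Matrix.det_transpose]
  rw [Matrix.mul_inv_rev, Matrix.mul_inv_rev]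
  simp only [Matrix.mulVec_mulVec]
  have : A * (A⁻¹ * (W⁻¹ * Aᵀ⁻¹) * (Aᵀ * W)) = 1 := by
    calc A * (A⁻¹ * (W⁻¹ * Aᵀ⁻¹) * (Aᵀ * W))
        = (A * A⁻¹) * (W⁻¹ * ((Aᵀ⁻¹ * Aᵀ) * W)) := by simp only [Matrix.mul_assoc]
      _ = 1 := by
        rw [Matrix.mul_nonsing_inv _ hA', Matrix.nonsing_inv_mul _ hAt, Matrix.one_mul,
          Matrix.one_mul, Matrix.nonsing_inv_mul _ hW']
  simp only [← Matrix.mul_assoc] at this ⊢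
  rw [this, Matrix.one_mulVec]

/-- Local convergence of Gauss-Newton for a just-identified GMM model. -/
theorem gauss_newton_local_convergence
    {p : ℕ}
    (g : (Fin p → ℝ) → (Fin p → ℝ))
    (G : (Fin p → ℝ) → Matrix (Fin p) (Fin p) ℝ)
    (W : Matrix (Fin p) (Fin p) ℝ)
    (θhat : Fin p → ℝ)
    (L σlo RG γ γt Wlo Whi R : ℝ)
    (hg : ContDiff ℝ 2 g)
    (hG : ∀ θ, HasFDerivAt g (toCLM (G θ)) θ)
    (hW : W.PosDef)
    (hWlo : 0 < Wlo) (hWmin : Wlo ≤ lamMin W) (hWmax : lamMax W ≤ Whi)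
    (hfoc : (G θhat)ᵀ *ᵥ (W *ᵥ g θhat) = 0)
    (hL : 0 ≤ L)
    (hLip : ∀ θ₁ θ₂, sigMax (G θ₁ - G θ₂) ≤ L * enorm' (θ₁ - θ₂))
    (hσpos : 0 < σlo)
    (hσ : ∀ θ, enorm' (θ - θhat) ≤ RG → σlo ≤ sigMin (G θ))
    (hγ : γ ∈ Set.Ioo (0 : ℝ) 1) (hγt : γt ∈ Set.Ioo (0 : ℝ) γ)
    (hR : R = min RG (((γ - γt) / γ) * σlo * Real.sqrt (Wlo / Whi) / L
          - (1 / (σlo * Real.sqrt Wlo)) * wnorm W (g θhat)))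
    (θseq : ℕ → (Fin p → ℝ))
    (h0 : enorm' (θseq 0 - θhat) ≤ R)
    (hrec : ∀ k, θseq (k + 1) = θseq k
      - γ • (((G (θseq k))ᵀ * W * G (θseq k))⁻¹ *ᵥ ((G (θseq k))ᵀ *ᵥ (W *ᵥ g (θseq k))))) :
    ∀ k, enorm' (θseq (k + 1) - θhat) ≤ (1 - γt) * enorm' (θseq k - θhat)
      ∧ enorm' (θseq (k + 1) - θhat) ≤ (1 - γt) ^ (k + 1) * enorm' (θseq 0 - θhat) := by
  obtain ⟨hγ0, hγ1⟩ := hγ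
  obtain ⟨hγt0, hγt1⟩ := hγt
  have hWu : IsUnit W := hW.isUnit
  have hWle : Wlo ≤ Whi :=
    hWmin.trans ((lamMin_le_lamMax W (hWlo.trans_le hWmin)).trans hWmax)
  have hRG : R ≤ RG := hR ▸ min_le_left _ _
  have hR0 : 0 ≤ R := (enorm'_nonneg _).trans h0
  have hsq0 : 0 ≤ Real.sqrt (Wlo / Whi) := Real.sqrt_nonneg _
  have hsq : Real.sqrt (Wlo / Whi) ≤ 1 := by
    rw [Real.sqrt_le_one]
    exact (div_le_one (hWlo.trans_le hWle)).2 hWle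
  have hLR : γ * (L * R) ≤ (γ - γt) * σlo := by
    have hpos : 0 ≤ (γ - γt) * σlo := mul_nonneg (by linarith) hσpos.le
    rcases hL.eq_or_lt with h | h
    · rw [← h]; simpa using hpos
    have h1 : R ≤ ((γ - γt) / γ) * σlo * Real.sqrt (Wlo / Whi) / L := by
      have h2 : R ≤ _ := hR ▸ min_le_right _ _
      have h3 : 0 ≤ (1 / (σlo * Real.sqrt Wlo)) * wnorm W (g θhat) :=
        mul_nonneg (by positivity) (Real.sqrt_nonneg _)
      linarith
    rw [le_div_iff₀ h] at h1
    have h4 : ((γ - γt) / γ) * σlo * Real.sqrt (Wlo / Whi) ≤ ((γ - γt) / γ) * σlo :=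
      mul_le_of_le_one_right (mul_nonneg (div_nonneg (by linarith) hγ0.le) hσpos.le) hsq
    have h5 := mul_le_mul_of_nonneg_left (h1.trans h4) hγ0.le
    have h6 : γ * ((γ - γt) / γ * σlo) = (γ - γt) * σlo := by field_simp
    linarith
  have hunit : ∀ θ, enorm' (θ - θhat) ≤ R → IsUnit (G θ) := fun θ h =>
    isUnit_of_sigMin _ (hσpos.trans_le (hσ θ (h.trans hRG)))
  have hg0 : g θhat = 0 := by
    have hu : IsUnit (G θhat) := hunit θhat (by simpa [enorm'_zero] using hR0)
    have h1 := gn_step (G θhat) W hu hWu (g θhat)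
    rw [hfoc] at h1
    simpa using h1.symm
  have hstep : ∀ k, enorm' (θseq k - θhat) ≤ R →
      enorm' (θseq (k + 1) - θhat) ≤ (1 - γt) * enorm' (θseq k - θhat) := by
    intro k hk
    have h1 := gn_step (G (θseq k)) W (hunit _ hk) hWu (g (θseq k))
    have h2 := hrec k
    set s := ((G (θseq k))ᵀ * W * G (θseq k))⁻¹ *ᵥ ((G (θseq k))ᵀ *ᵥ (W *ᵥ g (θseq k)))
    set d := θseq k - θhat with hd
    have h3 : θseq (k + 1) - θhat = (1 - γ) • d + γ • (d - s) := by
      rw [h2, hd]; ext i; simp; ring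
    have h4 := taylor_bound g G L hL hG hLip (θseq k) θhat
    rw [hg0, sub_zero, ← hd] at h4
    have h5 := sigMin_le (G (θseq k)) (d - s)
    rw [Matrix.mulVec_sub, h1] at h5
    have h6 := hσ (θseq k) (hk.trans hRG)
    have nd := enorm'_nonneg d
    have ns := enorm'_nonneg (d - s)
    have h7 : σlo * enorm' (d - s) ≤ L * enorm' d * enorm' d :=
      (mul_le_mul_of_nonneg_right h6 ns).trans (h5.trans h4)
    have h8 : γ * (L * enorm' d) ≤ (γ - γt) * σlo :=
      le_trans (mul_le_mul_of_nonneg_left (mul_le_mul_of_nonneg_left hk hL) hγ0.le) hLR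
    have h9 : σlo * (γ * enorm' (d - s)) ≤ σlo * ((γ - γt) * enorm' d) := by
      have a := mul_le_mul_of_nonneg_left h7 hγ0.le
      have b := mul_le_mul_of_nonneg_right h8 nd
      linarith
    have h10 := le_of_mul_le_mul_left h9 hσpos
    have h11 := enorm'_add_le ((1 - γ) • d) (γ • (d - s))
    rw [enorm'_smul, enorm'_smul, abs_of_pos hγ0, abs_of_pos (by linarith), ← h3] at h11
    linarith
  have hind : ∀ k, enorm' (θseq k - θhat) ≤ R ∧
      enorm' (θseq k - θhat) ≤ (1 - γt) ^ k * enorm' (θseq 0 - θhat) := by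
    intro k
    induction k with
    | zero => exact ⟨h0, by simp⟩
    | succ k ih =>
      have h1 := hstep k ih.1
      have nd := enorm'_nonneg (θseq k - θhat)
      refine ⟨by nlinarith [ih.1], h1.trans ?_⟩
      rw [pow_succ', mul_assoc]
      exact mul_le_mul_of_nonneg_left ih.2 (by linarith)
  exact fun k => ⟨hstep k (hind k).1, (hind (k + 1)).2⟩
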